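/- arXiv:2005.00297 — 2 statements merged into one kernel-verified Lean document; each statement's English description precedes it below -/
import Mathlib

section
/- Suppose every 5-edge-connected graph is Z_3-connected. Then every 5-edge-connected graph is Z_3-extendable at every vertex of degree 5. -/
open Finset

/-- A finite multigraph without loops: each edge `e` has two distinct
endpoints `fst e` and `snd e`.  An orientation is a map `D : E → Bool`,
where `D e = true` means `e` is directed from `fst e` to `snd e`. -/
structure Multigraph (V : Type) (E : Type) where
  fst : E → V
  snd : E → V
  no_loop : ∀ e, fst e ≠ snd e

namespace Multigraph

variable {V E : Type} [Fintype V] [DecidableEq V] [Fintype E] [DecidableEq E]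

/-- The tail (initial vertex) of edge `e` under orientation `D`. -/
def tail (G : Multigraph V E) (D : E → Bool) (e : E) : V :=
  if D e then G.fst e else G.snd e

/-- The head (terminal vertex) of edge `e` under orientation `D`. -/
def head (G : Multigraph V E) (D : E → Bool) (e : E) : V :=
  if D e then G.snd e else G.fst e

/-- Outdegree `d⁺_D(v)` (as an integer, for convenience). -/
def outDeg (G : Multigraph V E) (D : E → Bool) (v : V) : ℤ :=
  ((univ.filter fun e => G.tail D e = v).card : ℤ)

/-- Indegree `d⁻_D(v)`. -/
def inDeg (G : Multigraph V E) (D : E → Bool) (v : V) : ℤ :=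
  ((univ.filter fun e => G.head D e = v).card : ℤ)

/-- `e` is incident with `v`. -/
def Incident (G : Multigraph V E) (v : V) (e : E) : Prop :=
  G.fst e = v ∨ G.snd e = v

instance (G : Multigraph V E) (v : V) : DecidablePred (G.Incident v) := fun e =>
  inferInstanceAs (Decidable (G.fst e = v ∨ G.snd e = v))

/-- The degree of a vertex. -/
def degree (G : Multigraph V E) (v : V) : ℕ :=
  (univ.filter fun e => G.Incident v e).card

/-- The edge-cut `∂_G(A)`: edges with exactly one endpoint in `A`. -/
def cut (G : Multigraph V E) (A : Finset V) : Finset E :=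
  univ.filter fun e => ¬ ((G.fst e ∈ A) ↔ (G.snd e ∈ A))

/-- `G` is `k`-edge-connected: every edge-cut has at least `k` edges. -/
def EdgeConnected (G : Multigraph V E) (k : ℕ) : Prop :=
  ∀ A : Finset V, A.Nonempty → A ≠ univ → k ≤ (G.cut A).card

/-- A boundary function: values in `ℤ₃` summing to `0`. -/
def IsBoundary (β : V → ZMod 3) : Prop := ∑ v, β v = 0

/-- `D` is a `β`-orientation: `d⁺(v) - d⁻(v) ≡ β v (mod 3)` at every vertex. -/
def IsBetaOrientation (G : Multigraph V E) (β : V → ZMod 3) (D : E → Bool) : Prop :=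
  ∀ v : V, ((G.outDeg D v - G.inDeg D v : ℤ) : ZMod 3) = β v

/-- A mod 3-orientation: `d⁺(v) ≡ d⁻(v) (mod 3)` at every vertex. -/
def IsMod3Orientation (G : Multigraph V E) (D : E → Bool) : Prop :=
  ∀ v : V, ((G.outDeg D v - G.inDeg D v : ℤ) : ZMod 3) = 0

/-- `G` admits a mod 3-orientation (equivalently, a nowhere-zero 3-flow). -/
def Mod3Orientable (G : Multigraph V E) : Prop := ∃ D, G.IsMod3Orientation D

/-- `G` is `ℤ₃`-connected. -/
def Z3Connected (G : Multigraph V E) : Prop :=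
  ∀ β : V → ZMod 3, IsBoundary β → ∃ D, G.IsBetaOrientation β D

/-- `G` is `ℤ₃`-extendable at `x`: every pre-orientation of the edges at `x`
compatible with `β x` extends to a `β`-orientation of `G`. -/
def Z3ExtendableAt (G : Multigraph V E) (x : V) : Prop :=
  ∀ β : V → ZMod 3, IsBoundary β →
    ∀ D₀ : E → Bool, ((G.outDeg D₀ x - G.inDeg D₀ x : ℤ) : ZMod 3) = β x →
      ∃ D : E → Bool, (∀ e, G.Incident x e → D e = D₀ e) ∧ G.IsBetaOrientation β D

/-- `G` is mod-3-extendable at `x`: every pre-orientation of `∂(x)` with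
`d⁺(x) ≡ d⁻(x) (mod 3)` extends to a mod 3-orientation of `G`. -/
def Mod3ExtendableAt (G : Multigraph V E) (x : V) : Prop :=
  ∀ D₀ : E → Bool, ((G.outDeg D₀ x - G.inDeg D₀ x : ℤ) : ZMod 3) = 0 →
    ∃ D : E → Bool, (∀ e, G.Incident x e → D e = D₀ e) ∧ G.IsMod3Orientation D

/-- `A` is a `k`-critical-set: `d(A) ≤ k` but every nonempty proper subset has
larger boundary. -/
def CriticalSet (G : Multigraph V E) (k : ℕ) (A : Finset V) : Prop :=
  A.Nonempty ∧ A ≠ univ ∧ (G.cut A).card ≤ k ∧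
    ∀ B : Finset V, B.Nonempty → B ⊂ A → k < (G.cut B).card

/-- The set of edge-cuts of size exactly `k` (as sets of edges). -/
def kCuts (G : Multigraph V E) (k : ℕ) : Finset (Finset E) :=
  ((univ : Finset (Finset V)).filter
    fun A => A.Nonempty ∧ A ≠ univ ∧ (G.cut A).card = k).image G.cut


set_option linter.unusedSectionVars false

lemma ite_flip {P Q : Prop} [Decidable P] [Decidable Q] (h : P ↔ Q) :
    (if ¬ P then 1 else 0 : ℕ) = if Q then 0 else 1 := by
  by_cases hP : P
  · simp [hP, h.1 hP]
  · rw [if_pos hP, if_neg (fun hQ => hP (h.2 hQ))]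

/-- Signed contribution of an edge at a vertex. -/
def sg (G : Multigraph V E) (D : E → Bool) (e : E) (v : V) : ℤ :=
  (if G.tail D e = v then 1 else 0) - (if G.head D e = v then 1 else 0)

lemma net_eq (G : Multigraph V E) (D : E → Bool) (v : V) :
    G.outDeg D v - G.inDeg D v = ∑ e, G.sg D e v := by
  simp [outDeg, inDeg, sg, Finset.sum_sub_distrib]

lemma sum_sg (G : Multigraph V E) (D : E → Bool) (e : E) : ∑ v, G.sg D e v = 0 := by
  simp [sg, Finset.sum_sub_distrib]

/-- The end of `e` other than `x`. -/
def oth (G : Multigraph V E) (x : V) (e : E) : V :=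
  if G.fst e = x then G.snd e else G.fst e

lemma oth_ne (G : Multigraph V E) (x : V) (e : E) : G.oth x e ≠ x := by
  unfold oth
  have := G.no_loop e
  split_ifs with h
  · rw [← h]; exact this.symm
  · exact h

/-- Six copies of `G - x` joined along the edges of `K₆`. -/
def six (G : Multigraph V E) (x : V) (port : Fin 6 → {v : V // v ≠ x}) :
    Multigraph (Fin 6 × {v : V // v ≠ x})
      ((Fin 6 × {e : E // ¬ G.Incident x e}) ⊕ {p : Fin 6 × Fin 6 // p.1 < p.2}) where
  fst := Sum.elim (fun q => (q.1, ⟨G.fst q.2.1, fun h => q.2.2 (Or.inl h)⟩))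
    (fun p => (p.1.1, port (p.1.2 - p.1.1)))
  snd := Sum.elim (fun q => (q.1, ⟨G.snd q.2.1, fun h => q.2.2 (Or.inr h)⟩))
    (fun p => (p.1.2, port (p.1.1 - p.1.2)))
  no_loop := by
    rintro (⟨i, e⟩ | ⟨⟨i, j⟩, h⟩)
    · intro h
      simp only [Sum.elim_inl, Prod.mk.injEq, Subtype.mk.injEq, true_and] at h
      exact G.no_loop _ h
    · intro h'
      simp only [Sum.elim_inr, Prod.mk.injEq] at h'
      exact absurd h'.1 (ne_of_lt h)

lemma sum_pairs {M : Type} [AddCommMonoid M] (f : {p : Fin 6 × Fin 6 // p.1 < p.2} → M) :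
    ∑ p, f p = ∑ a, ∑ b, if h : a < b then f ⟨(a, b), h⟩ else 0 := by
  rw [← Fintype.sum_prod_type' (f := fun a b => if h : a < b then f ⟨(a, b), h⟩ else 0)]
  rw [← Finset.sum_filter_add_sum_filter_not univ (fun p : Fin 6 × Fin 6 => p.1 < p.2)]
  rw [Finset.sum_subtype (p := fun p : Fin 6 × Fin 6 => p.1 < p.2) _ (by simp)]
  rw [Finset.sum_eq_zero (s := filter _ _)]
  · rw [add_zero]
    apply Finset.sum_congr rfl
    rintro ⟨⟨a, b⟩, h⟩ _
    simp at h
    simp [h]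
  · rintro ⟨a, b⟩ h
    simp only [mem_filter, mem_univ, true_and] at h
    simp [h]

lemma force (s : Fin 6 → Fin 6 → ℤ) (h1 : ∀ i j, s i j = - s j i)
    (h2 : ∀ i j, i ≠ j → s i j = 1 ∨ s i j = -1)
    (h3 : ∀ i, (∑ j, s i j) % 3 = 2) : ∃ i, ∀ j, j ≠ i → s i j = 1 := by
  have h0 : ∑ i, ∑ j, s i j = 0 := by
    have : ∑ i, ∑ j, s i j = - ∑ i, ∑ j, s i j := by
      conv_lhs => rw [Finset.sum_comm]
      rw [← Finset.sum_neg_distrib]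
      refine Finset.sum_congr rfl fun i _ => ?_
      rw [← Finset.sum_neg_distrib]
      exact Finset.sum_congr rfl fun j _ => h1 j i
    omega
  have hex : ∃ i, 0 ≤ ∑ j, s i j := by
    by_contra! hc
    have := Finset.sum_lt_sum_of_nonempty (s := (univ : Finset (Fin 6))) ⟨0, mem_univ _⟩
      (fun i _ => hc i)
    simp at this
    omega
  obtain ⟨i, hi⟩ := hex
  refine ⟨i, ?_⟩
  have hii : s i i = 0 := by have := h1 i i; omega
  have h3i := h3 i
  by_contra! hc
  obtain ⟨j, hj, hjs⟩ := hc
  have hjs' : s i j = -1 := (h2 i j hj.symm).resolve_left hjs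
  -- write each value as `2 t - 1`
  have ht : ∀ k, k ≠ i → s i k = 1 ∨ s i k = -1 := fun k hk => h2 i k hk.symm
  clear h1 h2 h3 h0 hjs
  generalize s i = u at *
  rw [Fin.sum_univ_six] at *
  have a0 := ht 0
  have a1 := ht 1
  have a2 := ht 2
  have a3 := ht 3
  have a4 := ht 4
  have a5 := ht 5
  fin_cases i <;> simp at a0 a1 a2 a3 a4 a5 hii <;> fin_cases j <;> simp at hj hjs' <;> omega

lemma k6_cut : ∀ b : Fin 6 → Bool, (∃ i j, b i ≠ b j) →
    5 ≤ ∑ i, ∑ j, if i < j then (if b i = b j then 0 else 1) else 0 := by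
  decide +kernel

lemma k5_cut : ∀ i : Fin 6, ∀ b : Fin 6 → Bool, (∃ j k, j ≠ i ∧ k ≠ i ∧ b j ≠ b k) →
    4 ≤ ∑ j, ∑ k, if j < k then (if j = i ∨ k = i ∨ b j = b k then 0 else 1) else 0 := by
  decide +kernel

lemma star_le (X : Fin 6 → Fin 6 → ℕ) (hX : ∀ i j, X i j = X j i) (i : Fin 6) :
    ∑ j ∈ univ.erase i, X i j ≤ ∑ a, ∑ b, if a < b then X a b else 0 := by
  have : ∑ j ∈ univ.erase i, X i j + X i i = ∑ j, X i j :=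
    Finset.sum_erase_add _ _ (mem_univ i)
  have a1 := hX 1 0
  have a2 := hX 2 0
  have a3 := hX 3 0
  have a4 := hX 4 0
  have a5 := hX 5 0
  have b2 := hX 2 1
  have b3 := hX 3 1
  have b4 := hX 4 1
  have b5 := hX 5 1
  have c3 := hX 3 2
  have c4 := hX 4 2
  have c5 := hX 5 2
  have d4 := hX 4 3
  have d5 := hX 5 3
  have e5 := hX 5 4
  simp only [Fin.sum_univ_six] at *
  fin_cases i <;> simp at * <;> omega

lemma exists_port (G : Multigraph V E) (x : V) (hx : G.degree x = 5) :
    ∃ port : Fin 6 → {v : V // v ≠ x}, ∀ (M : Type) [AddCommMonoid M] (f : {v : V // v ≠ x} → M),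
      ∑ k ∈ univ.erase 0, f (port k) =
        ∑ e ∈ univ.filter (fun e => G.Incident x e), f ⟨G.oth x e, G.oth_ne x e⟩ := by
  have hc : (univ.erase (0 : Fin 6)).card = (univ.filter (fun e => G.Incident x e)).card := by
    rw [show (univ.filter (fun e => G.Incident x e)).card = 5 from hx]; rfl
  let q := Finset.equivOfCardEq hc
  let g : Fin 6 → E := fun k => if h : k ∈ univ.erase (0 : Fin 6) then q ⟨k, h⟩ else
    q ⟨1, by decide⟩
  refine ⟨fun k => ⟨G.oth x (g k), G.oth_ne x _⟩, fun M _ f => ?_⟩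
  rw [← Finset.sum_coe_sort (univ.erase (0 : Fin 6)),
    ← Finset.sum_coe_sort (univ.filter (fun e => G.Incident x e))]
  refine Fintype.sum_equiv q _ _ fun k => ?_
  have : g k = q k := by simp only [g, dif_pos k.2]
  simp only [this]

/-- Shift the port sum. -/
lemma shift {M : Type} [AddCommMonoid M] (f : Fin 6 → M) (i : Fin 6) :
    ∑ j ∈ univ.erase i, f (j - i) = ∑ k ∈ univ.erase 0, f k := by
  refine Finset.sum_equiv (Equiv.subRight i) ?_ ?_
  · intro j; simp [sub_eq_zero]
  · intro j _; simp

lemma six_conn (G : Multigraph V E) (x : V) (h5 : G.EdgeConnected 5)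
    (port : Fin 6 → {v : V // v ≠ x})
    (hp : ∀ (M : Type) [AddCommMonoid M] (f : {v : V // v ≠ x} → M),
      ∑ k ∈ univ.erase 0, f (port k) =
        ∑ e ∈ univ.filter (fun e => G.Incident x e), f ⟨G.oth x e, G.oth_ne x e⟩) :
    (G.six x port).EdgeConnected 5 := by
  intro A hA hA'
  classical
  let c : Fin 6 → ℕ := fun i => ∑ e : {e : E // ¬ G.Incident x e},
    if ((i, (⟨G.fst e.1, fun h => e.2 (Or.inl h)⟩ : {v : V // v ≠ x})) ∈ A ↔
      (i, (⟨G.snd e.1, fun h => e.2 (Or.inr h)⟩ : {v : V // v ≠ x})) ∈ A) then 0 else 1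
  let X : Fin 6 → Fin 6 → ℕ := fun i j =>
    if ((i, port (j - i)) ∈ A ↔ (j, port (i - j)) ∈ A) then 0 else 1
  have hXs : ∀ i j, X i j = X j i := by
    intro i j
    simp only [X]
    congr 1
    exact propext ⟨fun h => h.symm, fun h => h.symm⟩
  have hcut : ((G.six x port).cut A).card =
      ∑ i, c i + ∑ a, ∑ b, if a < b then X a b else 0 := by
    unfold cut
    rw [Finset.card_filter, Fintype.sum_sum_type, Fintype.sum_prod_type, sum_pairs]
    congr 1
    · refine Finset.sum_congr rfl fun i _ => Finset.sum_congr rfl fun e _ => ?_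
      exact ite_flip Iff.rfl
    · refine Finset.sum_congr rfl fun i _ => Finset.sum_congr rfl fun e _ => ?_
      by_cases h : i < e
      · rw [dif_pos h, if_pos h]
        exact ite_flip Iff.rfl
      · rw [dif_neg h, if_neg h]
  let p : Fin 6 → ℕ := fun i => ∑ k ∈ univ.erase (0 : Fin 6), if (i, port k) ∈ A then 1 else 0
  let q : Fin 6 → ℕ := fun i => ∑ k ∈ univ.erase (0 : Fin 6), if (i, port k) ∈ A then 0 else 1
  have hpq : ∀ i, p i + q i = 5 := by
    intro i
    simp only [p, q]
    rw [← Finset.sum_add_distrib]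
    rw [Finset.sum_congr rfl (g := fun _ => 1)]
    · rfl
    · intro k _; split_ifs <;> rfl
  -- cut in `G`
  have hG : ∀ (i : Fin 6) (B : Finset V), (∀ v : {v : V // v ≠ x}, v.1 ∈ B ↔ (i, v) ∈ A) →
      (G.cut B).card = c i + if x ∈ B then q i else p i := by
    intro i B hB
    have hB' : ∀ v (h : v ≠ x), v ∈ B ↔ (i, (⟨v, h⟩ : {v : V // v ≠ x})) ∈ A :=
      fun v h => hB ⟨v, h⟩
    unfold cut
    rw [Finset.card_filter, ← Finset.sum_filter_not_add_sum_filter univ (fun e => G.Incident x e)]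
    congr 1
    · rw [Finset.sum_subtype (p := fun e => ¬ G.Incident x e) _ (by simp)]
      refine Finset.sum_congr rfl fun e _ => ?_
      exact ite_flip (iff_congr (hB' _ (fun h => e.2 (Or.inl h))) (hB' _ (fun h => e.2 (Or.inr h))))
    · have key : ∀ e, G.Incident x e →
          ((G.fst e ∈ B ↔ G.snd e ∈ B) ↔ (x ∈ B ↔
            (i, (⟨G.oth x e, G.oth_ne x e⟩ : {v : V // v ≠ x})) ∈ A)) := by
        intro e he
        rw [← hB]
        simp only [oth]
        by_cases h : G.fst e = x
        · simp [h]
        · have h' : G.snd e = x := he.resolve_left h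
          simp [h, h', iff_comm]
      have hsum : ∀ f : {v : V // v ≠ x} → ℕ,
          (∀ e, G.Incident x e → (if ¬ (G.fst e ∈ B ↔ G.snd e ∈ B) then 1 else 0)
            = f ⟨G.oth x e, G.oth_ne x e⟩) →
          (∑ e ∈ univ.filter (fun e => G.Incident x e),
            if ¬ (G.fst e ∈ B ↔ G.snd e ∈ B) then 1 else 0) =
          ∑ k ∈ univ.erase (0 : Fin 6), f (port k) := by
        intro f hf
        rw [hp]
        refine Finset.sum_congr rfl fun e he => hf e (by simpa using he)
      split_ifs with hxB
      · refine hsum (fun v => if (i, v) ∈ A then 0 else 1) fun e he => ?_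
        exact ite_flip ((key e he).trans (by simp [hxB]))
      · refine hsum (fun v => if (i, v) ∈ A then 1 else 0) fun e he => ?_
        rw [ite_flip ((key e he).trans
          (show _ ↔ ¬ (i, (⟨G.oth x e, G.oth_ne x e⟩ : {v : V // v ≠ x})) ∈ A by simp [hxB])),
          ite_not]
  have hlow : ∀ i, (∃ v, (i, v) ∈ A) → 5 ≤ c i + p i := by
    rintro i ⟨v, hv⟩
    let B : Finset V := univ.filter fun v => ∃ h : v ≠ x, (i, (⟨v, h⟩ : {v : V // v ≠ x})) ∈ A
    have hxB : x ∉ B := by simp [B]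
    have := hG i B (fun v => by simp [B, v.2])
    rw [if_neg hxB] at this
    rw [← this]
    refine h5 B ⟨v.1, by simp [B, v.2, hv]⟩ fun h => hxB (by rw [h]; exact mem_univ _)
  have hhigh : ∀ i, (∃ v, (i, v) ∉ A) → 5 ≤ c i + q i := by
    rintro i ⟨v, hv⟩
    let B : Finset V := univ.filter fun v => ∀ h : v ≠ x, (i, (⟨v, h⟩ : {v : V // v ≠ x})) ∈ A
    have hxB : x ∈ B := by simp [B]
    have := hG i B (fun v => by simp [B, v.2])
    rw [if_pos hxB] at this
    rw [← this]
    refine h5 B ⟨x, hxB⟩ fun h => ?_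
    have : v.1 ∈ B := by rw [h]; exact mem_univ _
    simp [B, v.2, hv] at this
  have hnt : ∀ i, (∃ v, (i, v) ∈ A) → (∃ v, (i, v) ∉ A) → 3 ≤ c i := by
    intro i h1 h2
    have := hlow i h1
    have := hhigh i h2
    have := hpq i
    omega
  rw [hcut]
  let b : Fin 6 → Bool := fun i => decide ((i, port 0) ∈ A)
  by_cases hall : ∃ i, (∃ v, (i, v) ∈ A) ∧ (∃ v, (i, v) ∉ A)
  · obtain ⟨i, hi1, hi2⟩ := hall
    have hci := hnt i hi1 hi2
    by_cases htwo : ∃ j, j ≠ i ∧ (∃ v, (j, v) ∈ A) ∧ (∃ v, (j, v) ∉ A)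
    · obtain ⟨j, hj, hj1, hj2⟩ := htwo
      have hcj := hnt j hj1 hj2
      have : c i + c j ≤ ∑ i, c i := by
        rw [← Finset.sum_pair hj.symm]
        exact Finset.sum_le_sum_of_subset (Finset.subset_univ _)
      omega
    · have hci' : c i ≤ ∑ i, c i := Finset.single_le_sum (fun _ _ => Nat.zero_le _) (mem_univ i)
      have hb : ∀ j, j ≠ i → ∀ v, (j, v) ∈ A ↔ b j = true := by
        intro j hj v
        simp only [b, decide_eq_true_eq]
        constructor
        · intro h; by_contra h'; exact htwo ⟨j, hj, ⟨_, h⟩, ⟨_, h'⟩⟩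
        · intro h; by_contra h'; exact htwo ⟨j, hj, ⟨_, h⟩, ⟨_, h'⟩⟩
      by_cases hne : ∃ j k, j ≠ i ∧ k ≠ i ∧ b j ≠ b k
      · have h4 := k5_cut i b hne
        have : (∑ j, ∑ k, if j < k then (if j = i ∨ k = i ∨ b j = b k then 0 else 1) else 0) ≤
            ∑ a, ∑ b, if a < b then X a b else 0 := by
          refine Finset.sum_le_sum fun j _ => Finset.sum_le_sum fun k _ => ?_
          split_ifs with h h'
          · exact Nat.zero_le _
          · push Not at h'
            simp only [X]
            rw [if_neg]
            rw [hb j h'.1, hb k h'.2.1, ← Bool.eq_iff_iff]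
            exact h'.2.2
          · exact le_rfl
        omega
      · push Not at hne
        have hst := star_le X hXs i
        have : 5 ≤ c i + ∑ j ∈ univ.erase i, X i j := by
          obtain ⟨j0, hj0⟩ : ∃ j : Fin 6, j ≠ i := exists_ne i
          by_cases hb0 : b j0 = true
          · have : ∑ j ∈ univ.erase i, X i j = q i := by
              simp only [q]
              rw [← shift _ i]
              refine Finset.sum_congr rfl fun j hj => ?_
              have hj' : j ≠ i := by simpa using hj
              simp only [X]
              have hm : (j, port (i - j)) ∈ A := by rw [hb j hj', hne j j0 hj' hj0, hb0]
              simp [hm]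
            rw [this]; exact hhigh i hi2
          · have : ∑ j ∈ univ.erase i, X i j = p i := by
              simp only [p]
              rw [← shift _ i]
              refine Finset.sum_congr rfl fun j hj => ?_
              have hj' : j ≠ i := by simpa using hj
              simp only [X]
              have hm : (j, port (i - j)) ∉ A := by rw [hb j hj', hne j j0 hj' hj0]; exact hb0
              simp [hm]
            rw [this]; exact hlow i hi1
        omega
  · have hb : ∀ j v, (j, v) ∈ A ↔ b j = true := by
      intro j v
      simp only [b, decide_eq_true_eq]
      constructor
      · intro h; by_contra h'; exact hall ⟨j, ⟨_, h⟩, ⟨_, h'⟩⟩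
      · intro h; by_contra h'; exact hall ⟨j, ⟨_, h⟩, ⟨_, h'⟩⟩
    obtain ⟨⟨i, v⟩, hiv⟩ := hA
    obtain ⟨⟨j, w⟩, hjw⟩ : ∃ y, y ∉ A := by
      by_contra! h
      exact hA' (Finset.eq_univ_iff_forall.2 h)
    have h4 := k6_cut b ⟨i, j, by
      rw [hb] at hiv hjw
      rw [hiv]; exact fun h => hjw h.symm⟩
    have : (∑ j, ∑ k, if j < k then (if b j = b k then 0 else 1) else 0) =
        ∑ a, ∑ b, if a < b then X a b else 0 := by
      refine Finset.sum_congr rfl fun j _ => Finset.sum_congr rfl fun k _ => ?_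
      simp only [X]
      simp only [hb, ← Bool.eq_iff_iff]
    omega

lemma sg_true (G : Multigraph V E) (D : E → Bool) (e : E) (v : V) (h : D e = true) :
    G.sg D e v = (if G.fst e = v then 1 else 0) - (if G.snd e = v then 1 else 0) := by
  have h1 : G.tail D e = G.fst e := if_pos h
  have h2 : G.head D e = G.snd e := if_pos h
  rw [sg, h1, h2]

lemma sg_false (G : Multigraph V E) (D : E → Bool) (e : E) (v : V) (h : D e = false) :
    G.sg D e v = (if G.snd e = v then 1 else 0) - (if G.fst e = v then 1 else 0) := by
  have h1 : G.tail D e = G.snd e := if_neg (by simp [h])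
  have h2 : G.head D e = G.fst e := if_neg (by simp [h])
  rw [sg, h1, h2]

lemma six_sg_inl (G : Multigraph V E) (x : V) (port : Fin 6 → {v : V // v ≠ x})
    (DH : (Fin 6 × {e : E // ¬ G.Incident x e}) ⊕ {p : Fin 6 × Fin 6 // p.1 < p.2} → Bool)
    (D : E → Bool) (j i : Fin 6) (e : {e : E // ¬ G.Incident x e}) (v : {v : V // v ≠ x})
    (hDe : D e.1 = DH (Sum.inl (j, e))) :
    (G.six x port).sg DH (Sum.inl (j, e)) (i, v) = if j = i then G.sg D e.1 v.1 else 0 := by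
  cases h : DH (Sum.inl (j, e))
  · rw [sg_false _ _ _ _ h, sg_false _ _ _ _ (hDe.trans h)]
    by_cases hj : j = i <;> simp [six, hj, Subtype.ext_iff]
  · rw [sg_true _ _ _ _ h, sg_true _ _ _ _ (hDe.trans h)]
    by_cases hj : j = i <;> simp [six, hj, Subtype.ext_iff]

/-- If every 5-edge-connected graph is `ℤ₃`-connected, then every
5-edge-connected graph is `ℤ₃`-extendable at every vertex of degree 5. -/
theorem stmt_12
    (hyp : ∀ (V E : Type) [Fintype V] [DecidableEq V] [Fintype E] [DecidableEq E] (G : Multigraph V E),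
      G.EdgeConnected 5 → G.Z3Connected)
    {V E : Type} [Fintype V] [DecidableEq V] [Fintype E] [DecidableEq E] (G : Multigraph V E) (x : V)
    (h5 : G.EdgeConnected 5) (hx : G.degree x = 5) :
    G.Z3ExtendableAt x := by
  intro β hβ D₀ hD₀
  obtain ⟨port, hp⟩ := G.exists_port x hx
  have hconn := G.six_conn x h5 port hp
  let I : Finset E := univ.filter (fun e => G.Incident x e)
  have hIcard : I.card = 5 := hx
  let γ : {v : V // v ≠ x} → ZMod 3 := fun v =>
    β v - ∑ e ∈ I, (G.sg D₀ e v : ZMod 3) + ∑ e ∈ I, if G.oth x e = v then 1 else 0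
  have hsub : ∀ f : V → ZMod 3, ∑ v : {v : V // v ≠ x}, f v = ∑ v, f v - f x := by
    intro f
    rw [← Finset.sum_erase_add univ f (mem_univ x), add_sub_cancel_right]
    exact (Finset.sum_subtype (univ.erase x) (by simp) f).symm
  have hsgI : ∀ (D : E → Bool) (e : E), e ∉ I → G.sg D e x = 0 := by
    intro D e he
    have h1 : G.fst e ≠ x := fun h => he (Finset.mem_filter.2 ⟨mem_univ _, Or.inl h⟩)
    have h2 : G.snd e ≠ x := fun h => he (Finset.mem_filter.2 ⟨mem_univ _, Or.inr h⟩)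
    simp only [sg, tail, head]
    split_ifs <;> simp_all
  have hnetx : ∀ D : E → Bool, G.outDeg D x - G.inDeg D x = ∑ e ∈ I, G.sg D e x := by
    intro D
    rw [net_eq]
    exact (Finset.sum_subset (Finset.subset_univ I) fun e _ he => hsgI D e he).symm
  have hγ : ∑ v, γ v = 5 := by
    simp only [γ]
    rw [Finset.sum_add_distrib, Finset.sum_sub_distrib, hsub β]
    rw [hsub (fun v => ∑ e ∈ I, (G.sg D₀ e v : ZMod 3))]
    have e1 : ∑ v, ∑ e ∈ I, (G.sg D₀ e v : ZMod 3) = 0 := by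
      rw [Finset.sum_comm]
      refine Finset.sum_eq_zero fun e _ => ?_
      have := congrArg (Int.cast : ℤ → ZMod 3) (G.sum_sg D₀ e)
      simpa using this
    have e2 : ∑ v : {v : V // v ≠ x}, (∑ e ∈ I, if G.oth x e = v then (1 : ZMod 3) else 0) = 5 := by
      rw [Finset.sum_comm]
      rw [Finset.sum_congr rfl (g := fun _ => (1 : ZMod 3))]
      · simp [hIcard]
      · intro e _
        rw [Finset.sum_eq_single ⟨G.oth x e, G.oth_ne x e⟩]
        · simp
        · intro b _ hb
          rw [if_neg]
          intro h
          exact hb (Subtype.ext h.symm)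
        · simp
    have e3 : β x = ∑ e ∈ I, (G.sg D₀ e x : ZMod 3) := by
      rw [← hD₀, hnetx]; push_cast; rfl
    rw [e1, e2, show ∑ v, β v = 0 from hβ, e3]
    ring
  obtain ⟨DH, hDH⟩ := hyp _ _ (G.six x port) hconn (fun y => γ y.2) (by
    unfold IsBoundary
    rw [Fintype.sum_prod_type]
    simp only [hγ]
    decide)
  let D : Fin 6 → E → Bool := fun i e =>
    if h : ¬ G.Incident x e then DH (Sum.inl (i, ⟨e, h⟩)) else D₀ e
  let d : Fin 6 → Fin 6 → ℤ := fun a b =>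
    if h : a < b then (if DH (Sum.inr ⟨(a, b), h⟩) then 1 else -1) else 0
  let s : Fin 6 → Fin 6 → ℤ := fun i j => d i j - d j i
  have hnet : ∀ (i : Fin 6) (v : {v : V // v ≠ x}), (G.six x port).outDeg DH (i, v) -
      (G.six x port).inDeg DH (i, v) = ∑ e : {e : E // ¬ G.Incident x e}, G.sg (D i) e v +
        ∑ j, s i j * (if port (j - i) = v then 1 else 0) := by
    intro i v
    rw [net_eq, Fintype.sum_sum_type]
    congr 1
    · rw [Fintype.sum_prod_type, Finset.sum_eq_single i]
      · refine Finset.sum_congr rfl fun e _ => ?_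
        have hDe : D i e.1 = DH (Sum.inl (i, e)) := by simp only [D, dif_pos e.2]
        rw [G.six_sg_inl x port DH (D i) i i e v hDe, if_pos rfl]
      · intro j _ hj
        refine Finset.sum_eq_zero fun e _ => ?_
        have hDe : D j e.1 = DH (Sum.inl (j, e)) := by simp only [D, dif_pos e.2]
        rw [G.six_sg_inl x port DH (D j) j i e v hDe, if_neg hj]
      · simp
    · rw [sum_pairs]
      have : ∀ a b, (if h : a < b then (G.six x port).sg DH (Sum.inr ⟨(a, b), h⟩) (i, v) else 0) =
          (if a = i then d a b * (if port (b - a) = v then 1 else 0) else 0) -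
          (if b = i then d a b * (if port (a - b) = v then 1 else 0) else 0) := by
        intro a b
        by_cases h : a < b
        · simp only [d, dif_pos h]
          cases hD : DH (Sum.inr ⟨(a, b), h⟩)
          · rw [sg_false _ _ _ _ hD]
            by_cases h1 : a = i <;> by_cases h2 : b = i <;> simp [six, h1, h2] <;>
              split_ifs <;> simp
          · rw [sg_true _ _ _ _ hD]
            by_cases h1 : a = i <;> by_cases h2 : b = i <;> simp [six, h1, h2]
        · simp [d, h]
      simp only [this, Finset.sum_sub_distrib]
      rw [Finset.sum_comm (f := fun a b =>
        if a = i then d a b * (if port (b - a) = v then 1 else 0) else 0)]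
      simp only [Finset.sum_ite_eq', mem_univ, if_true]
      rw [← Finset.sum_sub_distrib]
      refine Finset.sum_congr rfl fun j _ => ?_
      simp only [s]; ring
  have hcopy : ∀ (i : Fin 6) (v : {v : V // v ≠ x}),
      ∑ e : {e : E // ¬ G.Incident x e}, (G.sg (D i) e v : ZMod 3) +
        ∑ j, (s i j : ZMod 3) * (if port (j - i) = v then 1 else 0) = γ v := by
    intro i v
    have h := hDH (i, v)
    rw [hnet] at h
    push_cast at h
    exact h
  obtain ⟨i, hi⟩ := force s (fun i j => by simp only [s]; ring) (by
    intro a b hab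
    rcases lt_or_gt_of_ne hab with h | h
    · simp only [s, d, dif_pos h, dif_neg h.not_gt]
      split_ifs <;> simp
    · simp only [s, d, dif_pos h, dif_neg h.not_gt]
      split_ifs <;> simp) (by
    intro i
    have h : ((∑ j, s i j : ℤ) : ZMod 3) = ((2 : ℤ) : ZMod 3) := by
      have h1 : ∑ v : {v : V // v ≠ x}, (∑ e : {e : E // ¬ G.Incident x e}, (G.sg (D i) e v : ZMod 3) +
        ∑ j, (s i j : ZMod 3) * (if port (j - i) = v then 1 else 0)) = 5 := by
        rw [← hγ]
        exact Finset.sum_congr rfl fun v _ => hcopy i v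
      rw [Finset.sum_add_distrib, Finset.sum_comm, Finset.sum_eq_zero, zero_add,
        Finset.sum_comm] at h1
      · simp at h1
        push_cast
        rw [h1]; decide
      · intro e _
        rw [hsub (fun v => (G.sg (D i) e v : ZMod 3)), hsgI (D i) e.1 (by simp [I, e.2])]
        have := congrArg (Int.cast : ℤ → ZMod 3) (G.sum_sg (D i) e)
        simpa using this
    rw [ZMod.intCast_eq_intCast_iff] at h
    simpa [Int.ModEq] using h)
  have hDI : ∀ e, G.Incident x e → D i e = D₀ e := by
    intro e he
    simp [D, he]
  have hsgD : ∀ e ∈ I, ∀ v, G.sg (D i) e v = G.sg D₀ e v := by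
    intro e he v
    have := hDI e (by simpa [I] using he)
    cases hD : D₀ e
    · rw [sg_false _ _ _ _ hD, sg_false _ _ _ _ (this.trans hD)]
    · rw [sg_true _ _ _ _ hD, sg_true _ _ _ _ (this.trans hD)]
  refine ⟨D i, hDI, fun v => ?_⟩
  by_cases hv : v = x
  · subst hv
    rw [← hD₀, hnetx, hnetx]
    congr 1
    exact Finset.sum_congr rfl fun e he => hsgD e he _
  · have h := hcopy i ⟨v, hv⟩
    have hs : ∑ j, (s i j : ZMod 3) * (if port (j - i) = ⟨v, hv⟩ then 1 else 0) =
        ∑ e ∈ I, if G.oth x e = v then 1 else 0 := by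
      have hii : s i i = 0 := by simp [s]
      rw [← Finset.sum_erase_add univ _ (mem_univ i), hii, Int.cast_zero, zero_mul, add_zero]
      have := hp (ZMod 3) (fun w => if w = ⟨v, hv⟩ then 1 else 0)
      simp only [Subtype.mk.injEq] at this
      rw [← this, ← shift _ i]
      refine Finset.sum_congr rfl fun j hj => ?_
      rw [hi j (by simpa using hj)]
      simp
    rw [hs] at h
    simp only [γ] at h
    have h' := add_right_cancel h
    rw [net_eq, ← Finset.sum_filter_not_add_sum_filter univ (fun e => G.Incident x e),
      Finset.sum_subtype (p := fun e => ¬ G.Incident x e) _ (by simp)]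
    push_cast
    rw [h', Finset.sum_congr rfl (fun e he => congrArg (Int.cast : ℤ → ZMod 3) (hsgD e he v))]
    simp only [I, sub_add_cancel]

end Multigraph
end

section
/- Suppose every 5-edge-connected graph G with a degree-5 vertex x is mod-3-extendable at x (i.e., any pre-orientation of ∂(x) with d^+(x) ≡ d^-(x) (mod 3) extends to a mod 3-orientation of G). Then every 4-edge-connected graph admits a nowhere-zero 3-flow, i.e., a mod 3-orientation. -/
open Finset

namespace Multigraph

variable {V E : Type} [Fintype V] [DecidableEq V] [Fintype E] [DecidableEq E]

set_option linter.unusedSectionVars false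

/-- number of edges crossing `A` in the graph with (possibly loop) edges `f e – s e`. -/
def dd (f s : E → V) (A : Finset V) : ℕ :=
  ∑ e, if (f e ∈ A ↔ s e ∈ A) then 0 else 1

/-- net outflow of `φ` from `A`. -/
def net (f s : E → V) (φ : E → ZMod 3) (A : Finset V) : ZMod 3 :=
  ∑ e, φ e * ((if f e ∈ A then 1 else 0) - (if s e ∈ A then 1 else 0))

/-- `k`-edge-connectivity of the part of the graph living on `S`. -/
def Conn (f s : E → V) (S : Finset V) (k : ℕ) : Prop :=
  (∀ e, f e = s e ∨ (f e ∈ S ∧ s e ∈ S)) ∧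
  ∀ A : Finset V, (∃ v ∈ S, v ∈ A) → (∃ v ∈ S, v ∉ A) → k ≤ dd f s A

/-- nowhere-zero flow mod 3. -/
def NZF (f s : E → V) (φ : E → ZMod 3) : Prop :=
  (∀ e, φ e ≠ 0) ∧ ∀ v, net f s φ {v} = 0

/-- The extension hypothesis in the loop setting. -/
def ExtHyp : Prop :=
  ∀ (V E : Type) [Fintype V] [DecidableEq V] [Fintype E] [DecidableEq E] (f s : E → V)
    (S : Finset V) (x : V), x ∈ S → Conn f s S 5 → dd f s {x} = 5 →
    ∀ φ₀ : E → ZMod 3, (∀ e, φ₀ e ≠ 0) → net f s φ₀ {x} = 0 →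
    ∃ φ : E → ZMod 3, NZF f s φ ∧ ∀ e, ¬ (f e ∈ ({x} : Finset V) ↔ s e ∈ ({x} : Finset V)) → φ e = φ₀ e

/-- sign of an orientation bit -/
def sgn (b : Bool) : ZMod 3 := if b then 1 else -1

theorem net_deg (G : Multigraph V E) (D : E → Bool) (v : V) :
    ((G.outDeg D v - G.inDeg D v : ℤ) : ZMod 3) = net G.fst G.snd (fun e => sgn (D e)) {v} := by
  unfold outDeg inDeg net
  rw [Finset.card_filter, Finset.card_filter]
  push_cast
  rw [← Finset.sum_sub_distrib]
  refine Finset.sum_congr rfl fun e _ => ?_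
  unfold tail head sgn
  cases D e <;> simp

theorem dd_eq_cut (G : Multigraph V E) (A : Finset V) : (G.cut A).card = dd G.fst G.snd A := by
  unfold cut dd
  rw [Finset.card_filter]
  refine Finset.sum_congr rfl fun e _ => ?_
  split_ifs <;> tauto

theorem sgn_ne (b : Bool) : sgn b ≠ 0 := by revert b; decide

theorem zmod_cases (a : ZMod 3) (h : a ≠ 0) : a = sgn (decide (a = 1)) := by
  revert a; decide

theorem sum_nonloop {M : Type} [AddCommMonoid M] (f s : E → V) (g : E → M)
    (hg : ∀ e, f e = s e → g e = 0) :
    ∑ e : {e // f e ≠ s e}, g e = ∑ e, g e := by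
  rw [← Finset.sum_filter_add_sum_filter_not univ (fun e => f e ≠ s e) g,
    Finset.sum_eq_zero (s := univ.filter fun e => ¬ (f e ≠ s e)) (by
      intro e he
      simp only [mem_filter, mem_univ, true_and, not_not] at he
      exact hg e he), add_zero]
  exact (Finset.sum_subtype _ (by simp) g).symm

theorem extHyp_of (hyp : ∀ (V E : Type) [Fintype V] [DecidableEq V] [Fintype E] [DecidableEq E] (G : Multigraph V E) (x : V),
      G.EdgeConnected 5 → G.degree x = 5 → G.Mod3ExtendableAt x) : ExtHyp := by
  intro V E _ _ _ _ f s S x hx hc hd φ₀ hφ hn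
  let G : Multigraph S {e // f e ≠ s e} :=
    { fst := fun e => ⟨f e, ((hc.1 e).resolve_left e.2).1⟩
      snd := fun e => ⟨s e, ((hc.1 e).resolve_left e.2).2⟩
      no_loop := fun e h => e.2 (by simpa using h) }
  have hdd : ∀ (A : Finset V) (A' : Finset S), (∀ v : S, v ∈ A' ↔ v.1 ∈ A) → dd G.fst G.snd A' = dd f s A := by
    intro A A' h
    unfold dd
    rw [← sum_nonloop f s (fun e => if (f e ∈ A ↔ s e ∈ A) then 0 else 1) (by intro e he; simp [he])]
    refine Finset.sum_congr rfl fun e _ => ?_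
    simp only [h, G]
  have hnet : ∀ (φ : E → ZMod 3) (A : Finset V) (A' : Finset S), (∀ v : S, v ∈ A' ↔ v.1 ∈ A) →
      net G.fst G.snd (fun e => φ e) A' = net f s φ A := by
    intro φ A A' h
    unfold net
    rw [← sum_nonloop f s (fun e => φ e * ((if f e ∈ A then 1 else 0) - (if s e ∈ A then 1 else 0))) (by intro e he; simp [he])]
    refine Finset.sum_congr rfl fun e _ => ?_
    simp only [h, G]
  have h1 : G.EdgeConnected 5 := by
    intro A hA hA'
    rw [dd_eq_cut, hdd (A.map (Function.Embedding.subtype _)) A (by simp)]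
    apply hc.2
    · obtain ⟨v, hv⟩ := hA
      exact ⟨v, v.2, by simp [hv]⟩
    · obtain ⟨v, hv⟩ : ∃ v, v ∉ A := by
        by_contra! h
        exact hA' (Finset.eq_univ_iff_forall.2 h)
      exact ⟨v, v.2, by simp [hv]⟩
  have h2 : G.degree ⟨x, hx⟩ = 5 := by
    rw [← hd, ← hdd {x} {⟨x, hx⟩} (by intro v; simp [Subtype.ext_iff]), ← dd_eq_cut]
    unfold degree cut
    congr 1
    ext e
    have := e.2
    simp only [Incident, G, Finset.mem_filter, Finset.mem_univ, true_and, Finset.mem_singleton, Subtype.mk.injEq]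
    grind
  obtain ⟨D, hD, hD'⟩ := hyp S _ G ⟨x, hx⟩ h1 h2 (fun e => decide (φ₀ e = 1)) (by
    rw [net_deg, ← hn, ← hnet φ₀ {x} {⟨x, hx⟩} (by intro v; simp [Subtype.ext_iff])]
    congr 1
    funext e
    exact (zmod_cases _ (hφ e)).symm)
  refine ⟨fun e => if h : f e ≠ s e then sgn (D ⟨e, h⟩) else 1, ⟨?_, ?_⟩, ?_⟩
  · intro e
    dsimp only
    split_ifs
    · exact sgn_ne _
    · decide
  · intro v
    by_cases hv : v ∈ S
    · rw [← hnet _ {v} {⟨v, hv⟩} (by intro v; simp [Subtype.ext_iff]), ← hD' ⟨v, hv⟩, net_deg]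
      congr 1
      funext e
      simp [e.2]
    · unfold net
      apply Finset.sum_eq_zero
      intro e _
      rcases hc.1 e with h | h
      · simp [h]
      · have h1 : f e ≠ v := by rintro rfl; exact hv h.1
        have h2 : s e ≠ v := by rintro rfl; exact hv h.2
        simp [h1, h2]
  · intro e he
    have h : f e ≠ s e := by intro h; simp [h] at he
    have := hD ⟨e, h⟩ (by
      simp only [Incident, G, Subtype.mk.injEq]
      simp only [Finset.mem_singleton] at he
      tauto)
    simp only [h, ne_eq, not_false_eq_true, dite_true, this]
    exact (zmod_cases _ (hφ e)).symm

theorem dd_compl (f s : E → V) (A : Finset V) : dd f s Aᶜ = dd f s A := by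
  unfold dd
  refine Finset.sum_congr rfl fun e _ => ?_
  simp only [Finset.mem_compl, not_iff_not]

theorem net_compl (f s : E → V) (φ : E → ZMod 3) (A : Finset V) :
    net f s φ Aᶜ = - net f s φ A := by
  unfold net
  rw [← Finset.sum_neg_distrib]
  refine Finset.sum_congr rfl fun e _ => ?_
  simp only [Finset.mem_compl]
  split_ifs <;> simp_all

theorem dd_comp (f s : E → V) (r : V → V) (A : Finset V) :
    dd (fun e => r (f e)) (fun e => r (s e)) A = dd f s (univ.filter fun v => r v ∈ A) := by
  unfold dd; simp

theorem net_comp (f s : E → V) (φ : E → ZMod 3) (r : V → V) (A : Finset V) :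
    net (fun e => r (f e)) (fun e => r (s e)) φ A = net f s φ (univ.filter fun v => r v ∈ A) := by
  unfold net; simp

theorem conn_comp (f s : E → V) (r : V → V) (S : Finset V) (k : ℕ) (h : Conn f s S k) :
    Conn (fun e => r (f e)) (fun e => r (s e)) (S.image r) k := by
  refine ⟨?_, ?_⟩
  · intro e
    rcases h.1 e with h | h
    · exact Or.inl (congrArg r h)
    · exact Or.inr ⟨mem_image_of_mem _ h.1, mem_image_of_mem _ h.2⟩
  · intro A h1 h2
    rw [dd_comp]
    apply h.2
    · obtain ⟨v, hv, hvA⟩ := h1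
      obtain ⟨w, hw, rfl⟩ := mem_image.1 hv
      exact ⟨w, hw, by simpa using hvA⟩
    · obtain ⟨v, hv, hvA⟩ := h2
      obtain ⟨w, hw, rfl⟩ := mem_image.1 hv
      exact ⟨w, hw, by simpa using hvA⟩

/-- 5-edge-connected case. -/
theorem case_five (H : ExtHyp) (f s : E → V) (S : Finset V) (hc : Conn f s S 5) :
    ∃ φ, NZF f s φ := by
  rcases S.eq_empty_or_nonempty with rfl | ⟨v, hv⟩
  · refine ⟨fun _ => 1, fun _ => one_ne_zero, fun v => ?_⟩
    unfold net
    apply Finset.sum_eq_zero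
    intro e _
    rcases hc.1 e with h | h
    · simp [h]
    · simp at h
  let f' : E ⊕ Fin 5 → Option V := Sum.elim (fun e => some (f e)) (fun _ => none)
  let s' : E ⊕ Fin 5 → Option V := Sum.elim (fun e => some (s e)) (fun _ => some v)
  have hdd : ∀ A : Finset (Option V), dd f' s' A = dd f s (univ.filter fun v => some v ∈ A) +
      5 * (if (none ∈ A ↔ some v ∈ A) then 0 else 1) := by
    intro A
    have h5 : (5 * if (none ∈ A ↔ some v ∈ A) then 0 else 1) =
        ∑ _i : Fin 5, if (none ∈ A ↔ some v ∈ A) then 0 else 1 := by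
      rw [Finset.sum_const]; simp
    rw [h5, dd, Fintype.sum_sum_type, dd]
    congr 1
    refine Finset.sum_congr rfl fun e _ => ?_
    simp only [mem_filter, mem_univ, true_and]
    rfl
  have hnet : ∀ φ : E ⊕ Fin 5 → ZMod 3, ∀ A : Finset (Option V), net f' s' φ A =
      net f s (fun e => φ (Sum.inl e)) (univ.filter fun v => some v ∈ A) +
      (∑ i, φ (Sum.inr i)) * ((if none ∈ A then 1 else 0) - (if some v ∈ A then 1 else 0)) := by
    intro φ A
    rw [net, Fintype.sum_sum_type, net, Finset.sum_mul]
    congr 1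
    refine Finset.sum_congr rfl fun e _ => ?_
    simp only [mem_filter, mem_univ, true_and]
    rfl
  let g : Fin 5 → ZMod 3 := ![1, 1, 1, 1, -1]
  have hg : ∑ i, g i = 0 := by decide
  obtain ⟨φ, ⟨hφ, hφ'⟩, hφ2⟩ := H (Option V) (E ⊕ Fin 5) f' s' (insert none (S.map Function.Embedding.some)) none
    (by simp) (by
      refine ⟨?_, ?_⟩
      · rintro (e | i)
        · rcases hc.1 e with h | h
          · left; simp [f', s', h]
          · right; simp [f', s', h]
        · right; simp [f', s', hv]
      · intro A h1 h2
        rw [hdd]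
        split_ifs with h
        · have : 5 ≤ dd f s (univ.filter fun v => some v ∈ A) := by
            apply hc.2
            · obtain ⟨w, hw, hwA⟩ := h1
              rcases w with _ | w
              · exact ⟨v, hv, by simpa using h.1 hwA⟩
              · exact ⟨w, by simpa using hw, by simpa using hwA⟩
            · obtain ⟨w, hw, hwA⟩ := h2
              rcases w with _ | w
              · exact ⟨v, hv, by simpa using fun h' => hwA (h.2 h')⟩
              · exact ⟨w, by simpa using hw, by simpa using hwA⟩
          omega
        · omega)
    (by rw [hdd]; simp [dd])
    (Sum.elim (fun _ => 1) g) (by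
      rintro (e | i)
      · simp
      · revert i; simp only [Sum.elim_inr, g]; decide) (by
      rw [hnet]
      simp [hg, net])
  refine ⟨fun e => φ (Sum.inl e), fun e => hφ _, fun u => ?_⟩
  have h1 := hφ' (some u)
  have h2 : ∑ i, φ (Sum.inr i) = 0 := by
    rw [← hg]
    refine Finset.sum_congr rfl fun i _ => ?_
    rw [hφ2 (Sum.inr i) (by simp [f', s'])]
    rfl
  rw [hnet, h2, zero_mul, add_zero] at h1
  rw [← h1]
  congr 1
  ext w
  simp

/-- Flow on a graph with minimal nontrivial 4-cut. -/
theorem case_cut (H : ExtHyp) (f s : E → V) (S A : Finset V) (hc : Conn f s S 4)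
    (hAS : A ⊆ S) (b : V) (hbS : b ∈ S) (hbA : b ∉ A) (a : V) (ha : a ∈ A) (hd : dd f s A = 4)
    (hmin : ∀ B, B ⊂ A → B.Nonempty → 5 ≤ dd f s B)
    (φ₁ : E → ZMod 3)
    (h₁ : NZF (fun e => if f e ∈ A then a else f e) (fun e => if s e ∈ A then a else s e) φ₁) :
    ∃ φ, NZF f s φ := by
  -- a crossing edge
  obtain ⟨e₀, he₀⟩ : ∃ e₀, ¬ (f e₀ ∈ A ↔ s e₀ ∈ A) := by
    by_contra! h
    simp [dd, h] at hd
  let r : V → V := fun v => if v ∈ A then v else b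
  have hrb : (univ.filter fun v => r v ∈ ({b} : Finset V)) = Aᶜ := by
    ext v
    simp only [r, mem_filter, mem_univ, true_and, mem_singleton, mem_compl]
    grind
  have hnet1 : ∀ v ∉ A, net f s φ₁ {v} = 0 := by
    intro v hv
    rw [← h₁.2 v]
    rw [net_comp f s φ₁ (fun v => if v ∈ A then a else v)]
    congr 1
    ext w
    simp only [mem_filter, mem_univ, true_and, mem_singleton]
    grind
  have hnetA : net f s φ₁ A = 0 := by
    rw [← h₁.2 a]
    rw [net_comp f s φ₁ (fun v => if v ∈ A then a else v)]
    congr 1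
    ext w
    simp only [mem_filter, mem_univ, true_and, mem_singleton]
    grind
  let f' : Option E → V := fun e => r (f (e.getD e₀))
  let s' : Option E → V := fun e => r (s (e.getD e₀))
  have hr : ∀ v, r v ∈ S := by intro v; simp only [r]; grind
  have hrA : ∀ v, r v = b ↔ v ∉ A := by intro v; simp only [r]; grind
  have hdd : ∀ C : Finset V, dd f' s' C = dd f s (univ.filter fun v => r v ∈ C) +
      (if (r (f e₀) ∈ C ↔ r (s e₀) ∈ C) then 0 else 1) := by
    intro C
    rw [← dd_comp]
    simp [dd, f', s', Fintype.sum_option, add_comm]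
  have hnet : ∀ φ : Option E → ZMod 3, ∀ ψ : E → ZMod 3, (∀ e, e ≠ e₀ → φ (some e) = ψ e) →
      (ψ e₀ = φ none + φ (some e₀)) → ∀ C : Finset V,
      net f' s' φ C = net f s ψ (univ.filter fun v => r v ∈ C) := by
    intro φ ψ h1 h2 C
    rw [← net_comp]
    simp only [net, f', s', Fintype.sum_option, Option.getD_none, Option.getD_some]
    rw [← Finset.add_sum_erase _ _ (mem_univ e₀), ← Finset.add_sum_erase univ (fun e => ψ e * _) (mem_univ e₀), ← add_assoc,
      h2, add_mul]
    congr 1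
    refine Finset.sum_congr rfl fun e he => ?_
    rw [h1 e (Finset.ne_of_mem_erase he)]
  -- connectivity for sets avoiding b
  have hconn : ∀ C : Finset V, b ∉ C → (∃ v ∈ S, v ∈ C ∧ v ∈ A) → 5 ≤ dd f' s' C := by
    intro C hb hv
    have hpre : (univ.filter fun v => r v ∈ C) = A ∩ C := by
      ext v
      simp only [r, mem_filter, mem_univ, true_and, mem_inter]
      grind
    rw [hdd, hpre]
    by_cases hAC : A ∩ C = A
    · rw [hAC, hd, if_neg]
      have : A ⊆ C := by rw [← hAC]; exact inter_subset_right
      simp only [r]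
      grind
    · have := hmin (A ∩ C) (inter_subset_left.ssubset_of_ne hAC) (by
        obtain ⟨v, _, h1, h2⟩ := hv
        exact ⟨v, mem_inter.2 ⟨h2, h1⟩⟩)
      omega
  have hne : φ₁ e₀ ≠ 0 := h₁.1 e₀
  have h3 : ∀ c : ZMod 3, c = -c + -c := by decide
  obtain ⟨φ', ⟨hφ, hφ'⟩, hφ2⟩ := H V (Option E) f' s' (S.image r) b
    (mem_image.2 ⟨b, hbS, by simp [r]⟩) (by
      refine ⟨?_, ?_⟩
      · intro e
        rcases hc.1 (e.getD e₀) with h | h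
        · left; simp only [f', s', h]
        · right; exact ⟨mem_image_of_mem _ h.1, mem_image_of_mem _ h.2⟩
      · intro C h1 h2
        obtain ⟨v, hv, hvC⟩ := h1
        obtain ⟨w, hw, hwC⟩ := h2
        obtain ⟨v, hv', rfl⟩ := mem_image.1 hv
        obtain ⟨w, hw', rfl⟩ := mem_image.1 hw
        by_cases hb : b ∈ C
        · rw [← dd_compl]
          exact hconn _ (by simpa using hb) ⟨r w, hr w, by simpa using hwC, by grind⟩
        · exact hconn _ hb ⟨r v, hr v, hvC, by grind⟩)
    (by
      rw [hdd, hrb, dd_compl, hd, if_neg]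
      simp only [mem_singleton, hrA]
      tauto)
    (fun e => e.elim (-φ₁ e₀) (fun e => if e = e₀ then -φ₁ e₀ else φ₁ e))
    (by
      rintro (_ | e)
      · simpa using hne
      · simp only [Option.elim_some]
        split_ifs
        · simpa using hne
        · exact h₁.1 e)
    (by
      rw [hnet _ φ₁ (by intro e he; simp [he]) (by simpa using h3 _), hrb, net_compl, hnetA, neg_zero])
  have hag : ∀ e, ¬ (f e ∈ A ↔ s e ∈ A) → φ' (some e) = if e = e₀ then -φ₁ e₀ else φ₁ e := by
    intro e he
    rw [hφ2 (some e) (by simp only [f', s', mem_singleton, hrA, Option.getD_some]; tauto)]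
    rfl
  have hag0 : φ' none = - φ₁ e₀ := by
    rw [hφ2 none (by simp only [f', s', mem_singleton, hrA, Option.getD_none]; tauto)]
    rfl
  let φ₂ : E → ZMod 3 := fun e => if e = e₀ then φ₁ e₀ else φ' (some e)
  have hφ₂ : ∀ v ∈ A, net f s φ₂ {v} = 0 := by
    intro v hv
    rw [← hφ' v, hnet φ' φ₂ (by intro e he; simp [φ₂, he]) (by
      rw [hag0, hag e₀ he₀]; simpa [φ₂] using h3 _)]
    congr 1
    ext w
    simp only [r, mem_filter, mem_univ, true_and, mem_singleton]
    grind
  have hφ₂' : ∀ e, ¬ (f e ∈ A ↔ s e ∈ A) → φ₂ e = φ₁ e := by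
    intro e he
    simp only [φ₂]
    rw [hag e he]
    grind
  refine ⟨fun e => if f e ∈ A ∧ s e ∈ A then φ₂ e else φ₁ e, ?_, ?_⟩
  · intro e
    dsimp only
    split_ifs
    · simp only [φ₂]
      split_ifs
      · exact hne
      · exact hφ _
    · exact h₁.1 e
  · intro v
    by_cases hv : v ∈ A
    · rw [← hφ₂ v hv]
      refine Finset.sum_congr rfl fun e _ => ?_
      have := hφ₂' e
      simp only [mem_singleton]
      by_cases h1 : f e = v <;> by_cases h2 : s e = v <;> simp only [h1, h2] <;> grind
    · rw [← hnet1 v hv]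
      refine Finset.sum_congr rfl fun e _ => ?_
      simp only [mem_singleton]
      by_cases h1 : f e = v <;> by_cases h2 : s e = v <;> simp only [h1, h2] <;> grind

theorem sum_four {M : Type} [AddCommMonoid M] (T : Finset E) (p q r t : E) (hT : T = {p, q, r, t})
    (h1 : p ≠ q) (h2 : p ≠ r) (h3 : p ≠ t) (h4 : q ≠ r) (h5 : q ≠ t) (h6 : r ≠ t) (g : E → M) :
    ∑ e, g e = (∑ e, if e ∈ T then 0 else g e) + (g p + (g q + (g r + g t))) := by
  have : ∑ e, g e = (∑ e, if e ∈ T then 0 else g e) + ∑ e, if e ∈ T then g e else 0 := by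
    rw [← Finset.sum_add_distrib]
    refine Finset.sum_congr rfl fun e _ => ?_
    split_ifs <;> simp
  rw [this]
  congr 1
  rw [Finset.sum_ite_mem, Finset.univ_inter, hT]
  rw [Finset.sum_insert (by simp [*]), Finset.sum_insert (by simp [*]), Finset.sum_insert (by simp [*]), Finset.sum_singleton]

/-- Data of a degree-four vertex with all edges directed away. -/
structure Deg4 (f s : E → V) (S : Finset V) (y : V) (T : Finset E) (p q r t : E) : Prop where
  hT : T = {p, q, r, t}
  h1 : p ≠ q
  h2 : p ≠ r
  h3 : p ≠ t
  h4 : q ≠ r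
  h5 : q ≠ t
  h6 : r ≠ t
  hf : ∀ e ∈ T, f e = y ∧ s e ≠ y ∧ s e ∈ S
  hn : ∀ e, e ∉ T → (f e = y ↔ s e = y)
  hc : Conn f s S 4

/-- crossing count off `T` -/
def dz (f s : E → V) (T : Finset E) (A : Finset V) : ℕ :=
  ∑ e, if e ∈ T then 0 else if (f e ∈ A ↔ s e ∈ A) then 0 else 1

theorem Deg4.swap {f s : E → V} {S : Finset V} {y : V} {T : Finset E} {p q r t : E}
    (h : Deg4 f s S y T p q r t) : Deg4 f s S y T p r q t := by
  obtain ⟨hT, h1, h2, h3, h4, h5, h6, hf, hn, hc⟩ := h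
  refine ⟨?_, h2, h1, h3, h4.symm, h6, h5, hf, hn, hc⟩
  rw [hT]; ext; simp; tauto

theorem Deg4.dz_ge {f s : E → V} {S : Finset V} {y : V} {T : Finset E} {p q r t : E}
    (h : Deg4 f s S y T p q r t) (A : Finset V) (hA : ∃ v ∈ S, v ∈ A ∧ v ≠ y) (hA' : ∃ v ∈ S, v ∉ A ∧ v ≠ y) :
    let k := (if s p ∈ A then 1 else 0) + ((if s q ∈ A then 1 else 0) +
      ((if s r ∈ A then 1 else 0) + (if s t ∈ A then 1 else 0)))
    4 ≤ dz f s T A + k ∧ k ≤ dz f s T A := by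
  intro k
  obtain ⟨v, hv, hvA, hvy⟩ := hA
  obtain ⟨w, hw, hwA, hwy⟩ := hA'
  have c1 := h.hc.2 (A.erase y) ⟨v, hv, by simp [hvA, hvy]⟩ ⟨w, hw, by simp [hwA]⟩
  have c2 := h.hc.2 (insert y A) ⟨v, hv, by simp [hvA]⟩ ⟨w, hw, by simp [hwA, hwy]⟩
  have e1 : dz f s T (A.erase y) = dz f s T A := by
    refine Finset.sum_congr rfl fun e _ => ?_
    have := h.hn e
    simp only [mem_erase]
    grind
  have e2 : dz f s T (insert y A) = dz f s T A := by
    refine Finset.sum_congr rfl fun e _ => ?_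
    have := h.hn e
    simp only [mem_insert]
    grind
  have hp := h.hf p (by simp [h.hT])
  have hq := h.hf q (by simp [h.hT])
  have hr := h.hf r (by simp [h.hT])
  have ht := h.hf t (by simp [h.hT])
  rw [dd, sum_four T p q r t h.hT h.h1 h.h2 h.h3 h.h4 h.h5 h.h6] at c1 c2
  change 4 ≤ dz f s T _ + _ at c1 c2
  rw [e1] at c1
  rw [e2] at c2
  simp only [mem_erase, mem_insert, hp.1, hq.1, hr.1, ht.1, hp.2.1, hq.2.1, hr.2.1, ht.2.1, ne_eq, not_true, not_false_eq_true,
    true_and, false_and, true_or, false_or, false_iff, true_iff] at c1 c2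
  simp only [k]
  constructor
  · split_ifs at c1 ⊢ <;> omega
  · split_ifs at c2 ⊢ <;> omega

/-- new first endpoints -/
def spf (f s : E → V) (T : Finset E) : E → V := fun e => if e ∈ T then s e else f e
/-- new second endpoints -/
def sps (s : E → V) (p q r t : E) : E → V := fun e => if e = p then s q else if e = r then s t else s e

theorem Deg4.dd_split {f s : E → V} {S : Finset V} {y : V} {T : Finset E} {p q r t : E}
    (h : Deg4 f s S y T p q r t) (A : Finset V) :
    dd (spf f s T) (sps s p q r t) A = dz f s T A + (if (s p ∈ A ↔ s q ∈ A) then 0 else 1)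
      + (if (s r ∈ A ↔ s t ∈ A) then 0 else 1) := by
  have hp : p ∈ T := by simp [h.hT]
  have hq : q ∈ T := by simp [h.hT]
  have hr : r ∈ T := by simp [h.hT]
  have ht : t ∈ T := by simp [h.hT]
  rw [dd, sum_four T p q r t h.hT h.h1 h.h2 h.h3 h.h4 h.h5 h.h6]
  have : (∑ e, if e ∈ T then 0 else if (spf f s T e ∈ A ↔ sps s p q r t e ∈ A) then 0 else 1) = dz f s T A := by
    refine Finset.sum_congr rfl fun e _ => ?_
    by_cases he : e ∈ T
    · simp [he]
    · have h1 : e ≠ p := by rintro rfl; exact he hp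
      have h2 : e ≠ r := by rintro rfl; exact he hr
      simp [he, spf, sps, h1, h2]
  rw [this]
  simp [spf, sps, hp, hq, hr, ht, h.h1.symm, h.h2.symm, h.h3.symm, h.h4, h.h6.symm, add_assoc]

theorem Deg4.net_split {f s : E → V} {S : Finset V} {y : V} {T : Finset E} {p q r t : E}
    (h : Deg4 f s S y T p q r t) (φ : E → ZMod 3) (A : Finset V) :
    net (spf f s T) (sps s p q r t) φ A =
     net f s (fun e => if e = p then - φ p else if e = q then φ p else if e = r then - φ r else
      if e = t then φ r else φ e) A := by
  have hp : p ∈ T := by simp [h.hT]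
  have hq : q ∈ T := by simp [h.hT]
  have hr : r ∈ T := by simp [h.hT]
  have ht : t ∈ T := by simp [h.hT]
  refine (sum_four T p q r t h.hT h.h1 h.h2 h.h3 h.h4 h.h5 h.h6 _).trans
    (Eq.trans ?_ (sum_four T p q r t h.hT h.h1 h.h2 h.h3 h.h4 h.h5 h.h6 _).symm)
  refine congrArg₂ (· + ·) ?_ ?_
  · refine Finset.sum_congr rfl fun e _ => ?_
    by_cases he : e ∈ T
    · simp [he]
    · have h1 : e ≠ p := by rintro rfl; exact he hp
      have h2 : e ≠ r := by rintro rfl; exact he hr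
      have h3 : e ≠ q := by rintro rfl; exact he hq
      have h4 : e ≠ t := by rintro rfl; exact he ht
      simp [he, spf, sps, h1, h2, h3, h4]
  · simp only [spf, sps, hp, hq, hr, ht, h.h1.symm, h.h2.symm, h.h3.symm, h.h4, h.h4.symm, h.h5.symm, h.h6.symm,
      (h.hf p hp).1, (h.hf q hq).1, (h.hf r hr).1, (h.hf t ht).1, if_true, if_false]
    ring

theorem Deg4.bad {f s : E → V} {S : Finset V} {y : V} {T : Finset E} {p q r t : E}
    (h : Deg4 f s S y T p q r t) (hbad : ¬ Conn (spf f s T) (sps s p q r t) (S.erase y) 4) :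
    ∃ X : Finset V, dz f s T X ≤ 3 ∧ (s p ∈ X ↔ s q ∈ X) ∧ (s r ∈ X ↔ s t ∈ X) ∧
      ¬ (s p ∈ X ↔ s r ∈ X) := by
  by_contra! hX
  apply hbad
  have hp := h.hf p (by simp [h.hT])
  have hq := h.hf q (by simp [h.hT])
  have hr := h.hf r (by simp [h.hT])
  have ht := h.hf t (by simp [h.hT])
  refine ⟨?_, ?_⟩
  · intro e
    have h1 := h.hc.1 e
    have h2 := h.hn e
    have h3 := h.hf e
    have h4 : p ∈ T := by simp [h.hT]
    have h5 : r ∈ T := by simp [h.hT]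
    simp only [spf, sps, mem_erase]
    grind
  · intro A hA hA'
    have hX := hX A
    have := h.dz_ge A (by
      obtain ⟨v, hv, hvA⟩ := hA
      rw [mem_erase] at hv
      exact ⟨v, hv.2, hvA, hv.1⟩) (by
      obtain ⟨v, hv, hvA⟩ := hA'
      rw [mem_erase] at hv
      exact ⟨v, hv.2, hvA, hv.1⟩)
    rw [h.dd_split]
    dsimp only at this
    by_cases c1 : s p ∈ A <;> by_cases c2 : s q ∈ A <;> by_cases c3 : s r ∈ A <;>
      by_cases c4 : s t ∈ A <;> simp only [c1, c2, c3, c4, if_true, if_false, iff_true, iff_false, not_true, not_false_eq_true, implies_true, imp_false, not_le] at this hX ⊢ <;> omega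

theorem dz_sub (f s : E → V) (T : Finset E) (X Y : Finset V) :
    dz f s T (X ∩ Y) + dz f s T (X ∪ Y) ≤ dz f s T X + dz f s T Y := by
  unfold dz
  rw [← Finset.sum_add_distrib, ← Finset.sum_add_distrib]
  refine Finset.sum_le_sum fun e _ => ?_
  simp only [mem_inter, mem_union]
  by_cases f e ∈ X <;> by_cases f e ∈ Y <;> by_cases s e ∈ X <;> by_cases s e ∈ Y <;> by_cases e ∈ T <;> simp [*]

theorem dz_par (f s : E → V) (T : Finset E) (X Y : Finset V) :
    ∃ m, dz f s T (X ∩ Y) + dz f s T (X \ Y) = dz f s T X + 2 * m := by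
  refine ⟨∑ e, if e ∈ T then 0 else if (f e ∈ X ∧ s e ∈ X ∧ ¬ (f e ∈ Y ↔ s e ∈ Y)) then 1 else 0, ?_⟩
  unfold dz
  rw [← Finset.sum_add_distrib, Finset.mul_sum, ← Finset.sum_add_distrib]
  refine Finset.sum_congr rfl fun e _ => ?_
  simp only [mem_inter, mem_sdiff]
  by_cases f e ∈ X <;> by_cases f e ∈ Y <;> by_cases s e ∈ X <;> by_cases s e ∈ Y <;> by_cases e ∈ T <;> simp [*]

theorem dz_sub' (f s : E → V) (T : Finset E) (X Y : Finset V) :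
    dz f s T (X \ Y) + dz f s T (Y \ X) ≤ dz f s T X + dz f s T Y := by
  unfold dz
  rw [← Finset.sum_add_distrib, ← Finset.sum_add_distrib]
  refine Finset.sum_le_sum fun e _ => ?_
  simp only [mem_sdiff]
  by_cases f e ∈ X <;> by_cases f e ∈ Y <;> by_cases s e ∈ X <;> by_cases s e ∈ Y <;> by_cases e ∈ T <;> simp [*]

theorem Deg4.good {f s : E → V} {S : Finset V} {y : V} {T : Finset E} {p q r t : E}
    (h : Deg4 f s S y T p q r t) : Conn (spf f s T) (sps s p q r t) (S.erase y) 4 ∨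
      Conn (spf f s T) (sps s p r q t) (S.erase y) 4 := by
  by_contra! hcon
  obtain ⟨X, x0, x1, x2, x3⟩ := h.bad hcon.1
  obtain ⟨Y, y0, y1, y2, y3⟩ := h.swap.bad hcon.2
  have hp := (h.hf p (by simp [h.hT])).2
  have hq := (h.hf q (by simp [h.hT])).2
  have hr := (h.hf r (by simp [h.hT])).2
  have ht := (h.hf t (by simp [h.hT])).2
  have key : ∀ Z : Finset V, (∃ v ∈ S, v ∈ Z ∧ v ≠ y) → (∃ v ∈ S, v ∉ Z ∧ v ≠ y) →
     ((if s p ∈ Z then 1 else 0) + ((if s q ∈ Z then 1 else 0) +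
      ((if s r ∈ Z then 1 else 0) + (if s t ∈ Z then 1 else 0))) = 1 ∨
      (if s p ∈ Z then 1 else 0) + ((if s q ∈ Z then 1 else 0) +
      ((if s r ∈ Z then 1 else 0) + (if s t ∈ Z then 1 else 0))) = 3) → 3 ≤ dz f s T Z := by
    intro Z h1 h2 h3
    have := h.dz_ge Z h1 h2
    dsimp only at this
    omega
  have key2 : ∀ Z : Finset V,
     ((if s p ∈ Z then 1 else 0) + ((if s q ∈ Z then 1 else 0) +
      ((if s r ∈ Z then 1 else 0) + (if s t ∈ Z then 1 else 0))) = 1 ∨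
      (if s p ∈ Z then 1 else 0) + ((if s q ∈ Z then 1 else 0) +
      ((if s r ∈ Z then 1 else 0) + (if s t ∈ Z then 1 else 0))) = 3) → 3 ≤ dz f s T Z := by
    intro Z h3
    refine key Z ?_ ?_ h3
    · by_contra! hh
      have a1 := hh _ hp.2
      have a2 := hh _ hq.2
      have a3 := hh _ hr.2
      have a4 := hh _ ht.2
      rw [if_neg (fun c => hp.1 (a1 c)), if_neg (fun c => hq.1 (a2 c)), if_neg (fun c => hr.1 (a3 c)), if_neg (fun c => ht.1 (a4 c))] at h3
      omega
    · by_contra! hh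
      have a1 := hh _ hp.2
      have a2 := hh _ hq.2
      have a3 := hh _ hr.2
      have a4 := hh _ ht.2
      rw [if_pos (by_contra fun c => hp.1 (a1 c)), if_pos (by_contra fun c => hq.1 (a2 c)), if_pos (by_contra fun c => hr.1 (a3 c)), if_pos (by_contra fun c => ht.1 (a4 c))] at h3
      omega
  have k1 : 3 ≤ dz f s T (X ∩ Y) := by
    apply key2
    simp only [mem_inter]
    by_cases c1 : s p ∈ X <;> by_cases c2 : s p ∈ Y <;> simp_all
  have k2 : 3 ≤ dz f s T (X ∪ Y) := by
    apply key2
    simp only [mem_union]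
    by_cases c1 : s p ∈ X <;> by_cases c2 : s p ∈ Y <;> simp_all
  have k3 : 3 ≤ dz f s T (X \ Y) := by
    apply key2
    simp only [mem_sdiff]
    by_cases c1 : s p ∈ X <;> by_cases c2 : s p ∈ Y <;> simp_all
  have k4 : 3 ≤ dz f s T (Y \ X) := by
    apply key2
    simp only [mem_sdiff]
    by_cases c1 : s p ∈ X <;> by_cases c2 : s p ∈ Y <;> simp_all
  have s1 := dz_sub f s T X Y
  have s2 := dz_sub' f s T X Y
  obtain ⟨m, hm⟩ := dz_par f s T X Y
  omega

theorem Deg4.lift {f s : E → V} {S : Finset V} {y : V} {T : Finset E} {p q r t : E}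
    (h : Deg4 f s S y T p q r t) (hφ : ∃ φ, NZF (spf f s T) (sps s p q r t) φ) : ∃ φ, NZF f s φ := by
  obtain ⟨φ, h1, h2⟩ := hφ
  refine ⟨_, ?_, fun v => (h.net_split φ {v}).symm.trans (h2 v)⟩
  intro e
  have := h1 e
  have := h1 p
  have := h1 r
  split_ifs <;> simpa

/-- Degree 4 reduction. -/
theorem case_deg (f s : E → V) (S : Finset V) (y : V) (hy : y ∈ S) (hc : Conn f s S 4)
    (hd : dd f s {y} = 4)
    (IH : ∀ f s : E → V, Conn f s (S.erase y) 4 → ∃ φ, NZF f s φ) : ∃ φ, NZF f s φ := by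
  let f' : E → V := fun e => if s e = y then s e else f e
  let s' : E → V := fun e => if s e = y then f e else s e
  have hdd : ∀ A, dd f' s' A = dd f s A := by
    intro A
    refine Finset.sum_congr rfl fun e _ => ?_
    simp only [f', s']
    by_cases he : s e = y
    · simp only [he, if_true, iff_comm]
    · simp only [he, if_false]
  have hc' : Conn f' s' S 4 := by
    refine ⟨?_, ?_⟩
    · intro e
      have := hc.1 e
      simp only [f', s']
      grind
    · intro A h1 h2
      rw [hdd]
      exact hc.2 A h1 h2
  suffices hs : ∃ φ, NZF f' s' φ by
    obtain ⟨φ, h1, h2⟩ := hs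
    refine ⟨fun e => if s e = y then - φ e else φ e, ?_, ?_⟩
    · intro e
      have := h1 e
      dsimp only
      split_ifs <;> simpa
    · intro v
      rw [← h2 v]
      refine Finset.sum_congr rfl fun e _ => ?_
      simp only [f', s']
      by_cases he : s e = y
      · simp only [he, if_true]; ring
      · simp only [he, if_false]
  let T : Finset E := univ.filter fun e => ¬ (f' e ∈ ({y} : Finset V) ↔ s' e ∈ ({y} : Finset V))
  have hT : T.card = 4 := by
    rw [← hd, ← hdd, Finset.card_filter]
    refine Finset.sum_congr rfl fun e _ => ?_
    split_ifs <;> tauto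
  obtain ⟨p, T1, hp, rfl', hT1⟩ := Finset.card_eq_succ.1 hT
  obtain ⟨q, r, t, h4, h5, h6, rfl⟩ := Finset.card_eq_three.1 hT1
  simp only [mem_insert, mem_singleton, not_or] at hp
  have D : Deg4 f' s' S y T p q r t := by
    refine ⟨rfl'.symm, hp.1, hp.2.1, hp.2.2, h4, h5, h6, ?_, ?_, hc'⟩
    · intro e he
      have := hc'.1 e
      simp only [T, mem_filter, mem_univ, true_and, mem_singleton] at he
      have h1 : s e = y → f' e = y := by intro h; simp [f', h]
      have h2 : s e ≠ y → s' e ≠ y := by intro h; simp [s', h]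
      grind
    · intro e he
      simpa only [T, mem_filter, mem_univ, true_and, mem_singleton, not_not] using he
  rcases D.good with h | h
  · exact D.lift (IH _ _ h)
  · exact D.swap.lift (IH _ _ h)

theorem main_flow (H : ExtHyp) : ∀ (n : ℕ) (f s : E → V) (S : Finset V), S.card = n → Conn f s S 4 →
    ∃ φ, NZF f s φ := by
  intro n
  induction n using Nat.strong_induction_on with
  | _ n IH =>
  intro f s S hn hc
  by_cases h5 : Conn f s S 5
  · exact case_five H f s S h5
  by_cases hdeg : ∃ y ∈ S, dd f s {y} = 4
  · obtain ⟨y, hy, hd⟩ := hdeg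
    exact case_deg f s S y hy hc hd fun f s h => IH _ (by rw [← hn]; exact card_lt_card (erase_ssubset hy)) f s _ rfl h
  let F : Finset (Finset V) := S.powerset.filter fun A => A.Nonempty ∧ A ≠ S ∧ dd f s A = 4
  have hF : F.Nonempty := by
    by_contra hF
    apply h5
    refine ⟨hc.1, fun A h1 h2 => ?_⟩
    have h3 := hc.2 A h1 h2
    by_contra h4
    apply hF
    refine ⟨A ∩ S, ?_⟩
    obtain ⟨v, hv, hvA⟩ := h1
    obtain ⟨w, hw, hwA⟩ := h2
    simp only [F, mem_filter, mem_powerset]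
    refine ⟨inter_subset_right, ⟨v, by simp [hv, hvA]⟩, ?_, ?_⟩
    · intro h
      rw [← h] at hw
      exact hwA (mem_inter.1 hw).1
    · have : dd f s (A ∩ S) = dd f s A := by
        refine Finset.sum_congr rfl fun e _ => ?_
        rcases hc.1 e with h | h
        · simp [h]
        · simp [h]
      omega
  obtain ⟨A, hA, hmin⟩ := F.exists_minimal hF
  simp only [F, mem_filter, mem_powerset] at hA
  obtain ⟨hAS, ⟨a, ha⟩, hne, hd⟩ := hA
  obtain ⟨b, hbS, hbA⟩ : ∃ b ∈ S, b ∉ A := by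
    by_contra! h
    exact hne (hAS.antisymm h)
  obtain ⟨a', ha', haa⟩ : ∃ a' ∈ A, a' ≠ a := by
    by_contra! h
    apply hdeg
    refine ⟨a, hAS ha, ?_⟩
    rw [← hd]
    congr 1
    ext v
    simp only [mem_singleton]
    exact ⟨fun h => h ▸ ha, h v⟩
  obtain ⟨φ₁, h₁⟩ := IH (S.image fun v => if v ∈ A then a else v).card (by
    rw [← hn]
    refine lt_of_le_of_ne card_image_le fun h => ?_
    have := card_image_iff.1 h
    exact haa (this (hAS ha') (hAS ha) (by simp [ha, ha']))) _ _ _ rfl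
      (conn_comp f s (fun v => if v ∈ A then a else v) S 4 hc)
  refine case_cut H f s S A hc hAS b hbS hbA a ha hd ?_ φ₁ h₁
  intro B hB hBn
  have h4 : 4 ≤ dd f s B := by
    obtain ⟨v, hv⟩ := hBn
    exact hc.2 B ⟨v, hAS (hB.1 hv), hv⟩ ⟨b, hbS, fun h => hbA (hB.1 h)⟩
  by_contra h
  have := hmin (y := B) (by
    simp only [F, mem_filter, mem_powerset]
    exact ⟨hB.1.trans hAS, hBn, by rintro rfl; exact hB.2 hAS, by omega⟩) hB.1
  exact hB.2 this

/-- If every 5-edge-connected graph with a degree-5 vertex is mod-3-extendable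
at that vertex, then every 4-edge-connected graph admits a mod 3-orientation
(equivalently, a nowhere-zero 3-flow). -/
theorem stmt_14
    (hyp : ∀ (V E : Type) [Fintype V] [DecidableEq V] [Fintype E] [DecidableEq E] (G : Multigraph V E) (x : V),
      G.EdgeConnected 5 → G.degree x = 5 → G.Mod3ExtendableAt x)
    {V E : Type} [Fintype V] [DecidableEq V] [Fintype E] [DecidableEq E] (G : Multigraph V E) (h4 : G.EdgeConnected 4) :
    G.Mod3Orientable := by
  obtain ⟨φ, h1, h2⟩ := main_flow (extHyp_of hyp) _ G.fst G.snd univ rfl (by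
    refine ⟨fun e => Or.inr ⟨mem_univ _, mem_univ _⟩, ?_⟩
    rintro A ⟨v, _, hv⟩ ⟨w, _, hw⟩
    rw [← dd_eq_cut]
    exact h4 A ⟨v, hv⟩ (by rintro rfl; exact hw (mem_univ _)))
  refine ⟨fun e => decide (φ e = 1), fun v => ?_⟩
  rw [net_deg, ← h2 v]
  congr 1
  funext e
  exact (zmod_cases _ (h1 e)).symm

end Multigraph
end
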